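/- (Theorem 4) Let n ∈ Im(Ca') with g(n,n) = −1 (a point of S^{3,3}), and let X, Y ∈ Im(Ca') with g(X,n) = g(Y,n) = 0 (tangent vectors at n). Define P Z := n×Z and (∇_A P)B := A×B + g(A×B, n)·n. Then the Nijenhuis tensor of the Cayley almost para-complex structure P, given by N_P(X,Y) = 2·((∇_{PX} P)Y − (∇_{PY} P)X + P((∇_Y P)X) − P((∇_X P)Y)), satisfies N_P(X,Y) = −8·n×(X×Y) = −8·P(X×Y). In particular the Cayley almost para-complex structure on S^{3,3} is non-integrable. -/

import Mathlib

-- The split octonion algebra Ca' as pairs of real quaternions.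
noncomputable section

abbrev Ca : Type := Quaternion ℝ × Quaternion ℝ

namespace Ca

/-- Split octonion multiplication: (a,b)·(c,d) = (ac + (conj d)b, da + b(conj c)). -/
def mul (x y : Ca) : Ca :=
  (x.1 * y.1 + star y.2 * x.2, y.2 * x.1 + x.2 * star y.1)

/-- The unit (1,0). -/
def one : Ca := (1, 0)

/-- Conjugation conj(a,b) = (conj a, −b). -/
def conj (x : Ca) : Ca := (star x.1, -x.2)

/-- Real part Re(a,b) = re a. -/
def re (x : Ca) : ℝ := x.1.re

/-- Norm form N(a,b) = ‖a‖² − ‖b‖², of signature (4,4). -/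
def N (x : Ca) : ℝ := Quaternion.normSq x.1 - Quaternion.normSq x.2

/-- The symmetric bilinear form ⟨x,y⟩ = (N(x+y) − N(x) − N(y))/2. -/
def bil (x y : Ca) : ℝ := (N (x + y) - N x - N y) / 2

/-- The vector cross product on Im(Ca'): X × Y := X·Y + g(X,Y)·1. -/
def cross (X Y : Ca) : Ca := mul X Y + bil X Y • one

end Ca

/-- The covariant derivative of the Cayley almost para-complex structure on S^{3,3}:
(∇_A P)B = A×B + g(A×B,n)·n. -/
def nablaP (n A B : Ca) : Ca := Ca.cross A B + Ca.bil (Ca.cross A B) n • n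

/-- The Cayley almost para-complex structure P X = n×X. -/
def Pmap (n X : Ca) : Ca := Ca.cross n X

/-! Everything rests on the identity `conj x · (x · y) = N(x) y`. For imaginary vectors it yields
anticommutativity of the cross product, the orthogonality `⟨x, x × y⟩ = 0`, and
`x × (x × y) = ⟨x, y⟩ x - ⟨x, x⟩ y`. Polarizing the last one gives, for tangent vectors,
`(∇_{PX} P) Y = -n × (X × Y) - (1 + ⟨n, n⟩) ⟨X, Y⟩ n`. The last term is symmetric in `X` and `Y`, so
it cancels from the Nijenhuis tensor, to which each of the four signed summands then contributes
`-n × (X × Y)`.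
-/

namespace Ca

open scoped InnerProductSpace

theorem re_add (x y : Ca) : re (x + y) = re x + re y := rfl

theorem re_neg (x : Ca) : re (-x) = -re x := rfl

theorem re_smul (r : ℝ) (x : Ca) : re (r • x) = r * re x := rfl

theorem re_one : re one = 1 := rfl

theorem re_add_eq_zero {x y : Ca} (hx : re x = 0) (hy : re y = 0) : re (x + y) = 0 := by
  rw [re_add, hx, hy, add_zero]

theorem bil_eq_inner (x y : Ca) : bil x y = ⟪x.1, y.1⟫_ℝ - ⟪x.2, y.2⟫_ℝ := by
  simp only [bil, N, Prod.fst_add, Prod.snd_add, Quaternion.normSq_add, Quaternion.inner_def]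
  ring

theorem bil_self (x : Ca) : bil x x = N x := by
  simp only [bil_eq_inner, Quaternion.inner_self, N]

theorem bil_comm (x y : Ca) : bil x y = bil y x := by
  simp only [bil_eq_inner, real_inner_comm]

theorem bil_add_left (x y z : Ca) : bil (x + y) z = bil x z + bil y z := by
  simp only [bil_eq_inner, Prod.fst_add, Prod.snd_add, inner_add_left]
  ring

theorem bil_add_right (x y z : Ca) : bil x (y + z) = bil x y + bil x z := by
  rw [bil_comm, bil_add_left, bil_comm y, bil_comm z]

theorem bil_smul_left (r : ℝ) (x y : Ca) : bil (r • x) y = r * bil x y := by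
  simp only [bil_eq_inner, Prod.smul_fst, Prod.smul_snd, real_inner_smul_left]
  ring

theorem bil_smul_right (r : ℝ) (x y : Ca) : bil x (r • y) = r * bil x y := by
  rw [bil_comm, bil_smul_left, bil_comm]

theorem bil_neg_right (x y : Ca) : bil x (-y) = -bil x y := by
  rw [← neg_one_smul ℝ y, bil_smul_right, neg_one_mul]

theorem bil_sub_right (x y z : Ca) : bil x (y - z) = bil x y - bil x z := by
  rw [sub_eq_add_neg, bil_add_right, bil_neg_right, ← sub_eq_add_neg]

theorem bil_one_right (x : Ca) : bil x one = re x := by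
  simp [bil_eq_inner, Quaternion.inner_def, one, re]

protected theorem mul_add (x y z : Ca) : mul x (y + z) = mul x y + mul x z := by
  apply Prod.ext <;>
    simp only [mul, Prod.fst_add, Prod.snd_add, star_add, mul_add, add_mul] <;> abel

protected theorem add_mul (x y z : Ca) : mul (x + y) z = mul x z + mul y z := by
  apply Prod.ext <;>
    simp only [mul, Prod.fst_add, Prod.snd_add, mul_add, add_mul] <;> abel

protected theorem mul_smul (r : ℝ) (x y : Ca) : mul x (r • y) = r • mul x y := by
  apply Prod.ext <;> simp [mul]

protected theorem neg_mul (x y : Ca) : mul (-x) y = -mul x y := by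
  apply Prod.ext <;>
    simp only [mul, Prod.fst_neg, Prod.snd_neg, neg_mul, mul_neg] <;> abel

protected theorem mul_one (x : Ca) : mul x one = x := by
  simp [mul, one]

theorem conj_mul_mul (x y : Ca) : mul (conj x) (mul x y) = N x • y := by
  obtain ⟨a, b⟩ := x
  obtain ⟨c, d⟩ := y
  have fst_eq : star a * (a * c + star d * b) + star (d * a + b * star c) * -b =
      star a * a * c - c * (star b * b) := by
    simp only [star_add, star_mul, star_star]
    noncomm_ring
  have snd_eq : (d * a + b * star c) * star a + -b * star (a * c + star d * b) =
      d * (a * star a) - b * star b * d := by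
    simp only [star_add, star_mul, star_star]
    noncomm_ring
  rw [Quaternion.star_mul_self, Quaternion.star_mul_self, Quaternion.coe_mul_eq_smul,
    Quaternion.mul_coe_eq_smul, ← sub_smul] at fst_eq
  rw [Quaternion.self_mul_star, Quaternion.self_mul_star, Quaternion.coe_mul_eq_smul,
    Quaternion.mul_coe_eq_smul, ← sub_smul] at snd_eq
  exact Prod.ext fst_eq snd_eq

theorem re_conj_mul (x y : Ca) : re (mul (conj x) y) = bil x y := by
  simp only [re, mul, conj, bil_eq_inner, Quaternion.inner_def, Quaternion.re_add,
    Quaternion.re_mul, Quaternion.re_star, Quaternion.imI_star, Quaternion.imJ_star,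
    Quaternion.imK_star, mul_neg, Quaternion.re_neg]
  ring

theorem bil_mul_right_self (x y : Ca) : bil x (mul x y) = N x * re y := by
  rw [← re_conj_mul, conj_mul_mul, re_smul]

theorem conj_eq_neg {x : Ca} (hx : re x = 0) : conj x = -x :=
  Prod.ext (Quaternion.star_eq_neg.mpr hx) rfl

theorem mul_self_mul {x : Ca} (hx : re x = 0) (y : Ca) : mul x (mul x y) = -(N x • y) := by
  rw [← conj_mul_mul, conj_eq_neg hx, Ca.neg_mul, neg_neg]

theorem cross_add_left (x y z : Ca) : cross (x + y) z = cross x z + cross y z := by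
  simp only [cross, Ca.add_mul, bil_add_left]
  module

theorem cross_add_right (x y z : Ca) : cross x (y + z) = cross x y + cross x z := by
  simp only [cross, Ca.mul_add, bil_add_right]
  module

theorem cross_smul_right (r : ℝ) (x y : Ca) : cross x (r • y) = r • cross x y := by
  simp only [cross, Ca.mul_smul, bil_smul_right]
  module

theorem cross_neg_right (x y : Ca) : cross x (-y) = -cross x y := by
  rw [← neg_one_smul ℝ y, cross_smul_right, neg_one_smul]

theorem cross_self {x : Ca} (hx : re x = 0) : cross x x = 0 := by
  have mul_self : mul x x = -(N x • one) := by
    simpa only [Ca.mul_one] using mul_self_mul hx one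
  rw [cross, mul_self, bil_self, neg_add_cancel]

theorem re_cross {x y : Ca} (hx : re x = 0) : re (cross x y) = 0 := by
  have re_mul : re (mul x y) = -bil x y := by
    rw [← re_conj_mul, conj_eq_neg hx, Ca.neg_mul, re_neg, neg_neg]
  rw [cross, re_add, re_mul, re_smul, re_one, mul_one, neg_add_cancel]

theorem cross_anticomm {x y : Ca} (hx : re x = 0) (hy : re y = 0) : cross x y = -cross y x := by
  have h := cross_self (re_add_eq_zero hx hy)
  simp only [cross_add_left, cross_add_right, cross_self hx, cross_self hy] at h
  linear_combination (norm := module) h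

theorem bil_cross_right_self {x y : Ca} (hx : re x = 0) (hy : re y = 0) :
    bil x (cross x y) = 0 := by
  rw [cross, bil_add_right, bil_smul_right, bil_mul_right_self, bil_one_right, hx, hy]
  ring

theorem cross_cross_self {x y : Ca} (hx : re x = 0) (hy : re y = 0) :
    cross x (cross x y) = bil x y • x - bil x x • y := by
  calc cross x (cross x y) = mul x (cross x y) := by
        rw [cross, bil_cross_right_self hx hy, zero_smul, add_zero]
    _ = mul x (mul x y) + bil x y • x := by rw [cross, Ca.mul_add, Ca.mul_smul, Ca.mul_one]
    _ = bil x y • x - bil x x • y := by rw [mul_self_mul hx, bil_self]; abel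

theorem cross_cross_add_cross_cross {x y z : Ca} (hx : re x = 0) (hy : re y = 0) (hz : re z = 0) :
    cross x (cross y z) + cross y (cross x z) =
      bil x z • y + bil y z • x - (2 * bil x y) • z := by
  have h := cross_cross_self (re_add_eq_zero hx hy) hz
  simp only [cross_add_left, cross_add_right, bil_add_left, bil_add_right, bil_comm y x] at h
  linear_combination (norm := module) h - cross_cross_self hx hz - cross_cross_self hy hz

theorem cross_cross_of_bil_eq_zero {n x y : Ca} (hn : re n = 0) (hx : re x = 0) (hy : re y = 0)
    (hxn : bil x n = 0) (hyn : bil y n = 0) :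
    cross (cross n x) y = -cross n (cross x y) - bil x y • n := by
  have polarized := cross_cross_add_cross_cross hy hn hx
  rw [cross_anticomm hy hx, cross_neg_right, hyn, bil_comm n x, hxn, bil_comm y x] at polarized
  rw [cross_anticomm (re_cross hn) hy]
  linear_combination (norm := module) -polarized

end Ca

section Nijenhuis

open Ca

variable {n X Y : Ca}

theorem nablaP_Pmap (hn : re n = 0) (hX : re X = 0) (hY : re Y = 0)
    (hXn : bil X n = 0) (hYn : bil Y n = 0) :
    nablaP n (Pmap n X) Y = -cross n (cross X Y) - ((1 + bil n n) * bil X Y) • n := by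
  have normal_component : bil (cross (cross n X) Y) n = -(bil X Y * bil n n) := by
    rw [cross_cross_of_bil_eq_zero hn hX hY hXn hYn, bil_comm, bil_sub_right, bil_neg_right,
      bil_cross_right_self hn (re_cross hX), bil_smul_right, neg_zero, zero_sub]
  rw [nablaP, Pmap, normal_component, cross_cross_of_bil_eq_zero hn hX hY hXn hYn]
  module

theorem Pmap_nablaP (hn : re n = 0) (X Y : Ca) :
    Pmap n (nablaP n X Y) = cross n (cross X Y) := by
  rw [nablaP, Pmap, cross_add_right, cross_smul_right, cross_self hn, smul_zero, add_zero]

theorem nijenhuis_P_general (hn : re n = 0) (hX : re X = 0) (hY : re Y = 0)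
    (hXn : bil X n = 0) (hYn : bil Y n = 0) :
    (2 : ℝ) • (nablaP n (Pmap n X) Y - nablaP n (Pmap n Y) X
        + Pmap n (nablaP n Y X) - Pmap n (nablaP n X Y)) =
      (-8 : ℝ) • cross n (cross X Y) := by
  rw [nablaP_Pmap hn hX hY hXn hYn, nablaP_Pmap hn hY hX hYn hXn, Pmap_nablaP hn, Pmap_nablaP hn,
    cross_anticomm hY hX, cross_neg_right, bil_comm Y X]
  module

end Nijenhuis

/-- Theorem 4: the Nijenhuis tensor of the Cayley almost para-complex structure P on
S^{3,3} satisfies N_P(X,Y) = −8·n×(X×Y) = −8·P(X×Y); in particular it is nonzero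
whenever X×Y ≠ 0, so P is non-integrable. -/
theorem nijenhuis_P (n X Y : Ca) (hn : Ca.re n = 0) (hnn : Ca.bil n n = -1)
    (hX : Ca.re X = 0) (hY : Ca.re Y = 0)
    (hXn : Ca.bil X n = 0) (hYn : Ca.bil Y n = 0) :
    (2 : ℝ) • (nablaP n (Pmap n X) Y - nablaP n (Pmap n Y) X
        + Pmap n (nablaP n Y X) - Pmap n (nablaP n X Y)) =
      (-8 : ℝ) • Ca.cross n (Ca.cross X Y) ∧
    (-8 : ℝ) • Ca.cross n (Ca.cross X Y) = (-8 : ℝ) • Pmap n (Ca.cross X Y) :=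
  ⟨nijenhuis_P_general hn hX hY hXn hYn, rfl⟩
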